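/- Let n ≥ 2, fix j ∈ Fin n, and let P be a partition of Fin n \ {j} (a family of pairwise disjoint nonempty blocks whose union is Fin n \ {j}). Let H be the subgroup of Aut(F_n) generated by all inner automorphisms together with the Whitehead generators α_{B,j} for the blocks B ∈ P. Then for a finite set I ⊆ Fin n with j ∉ I, the Whitehead generator α_{I,j} lies in H if and only if I is a union of blocks of P (equivalently, every block B ∈ P satisfies B ⊆ I or B ∩ I = ∅). -/

import Mathlib

/-- The Whitehead generator `α_{I,j} ∈ Aut(F_n)`: the automorphism of the free group
`FreeGroup (Fin n)` determined on the basis by `x i ↦ x j⁻¹ * x i * x j` for `i ∈ I`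
and `x i ↦ x i` for `i ∉ I`. -/
def whitehead (n : ℕ) (I : Finset (Fin n)) (j : Fin n) : MulAut (FreeGroup (Fin n)) :=
  MonoidHom.toMulEquiv
    (FreeGroup.lift (fun i : Fin n =>
      if i ∈ I then (FreeGroup.of j)⁻¹ * FreeGroup.of i * FreeGroup.of j
      else FreeGroup.of i))
    (FreeGroup.lift (fun i : Fin n =>
      if i ∈ I then FreeGroup.of j * FreeGroup.of i * (FreeGroup.of j)⁻¹
      else FreeGroup.of i))
    (by
      apply FreeGroup.ext_hom
      intro i
      by_cases hi : i ∈ I <;> by_cases hj : j ∈ I <;>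
        simp [hi, hj, FreeGroup.lift_apply_of] <;> group)
    (by
      apply FreeGroup.ext_hom
      intro i
      by_cases hi : i ∈ I <;> by_cases hj : j ∈ I <;>
        simp [hi, hj, FreeGroup.lift_apply_of] <;> group)

/-!
Every element of `H` acts on the basis elements of a fixed block `B` as some inner automorphism
does: `α_{B,j}` acts as conjugation by `x_j⁻¹`, and the other generators `α_{C,j}` fix these
elements. If `B` contained both some `i ∈ I` and some `i' ∉ I`, then `α_{I,j} ∈ H` would give a `w`
with `w x_i w⁻¹ = x_j⁻¹ x_i x_j` and `w x_{i'} w⁻¹ = x_{i'}`. The homomorphism to `S₃` sending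
`x_j` to `(1 2)` and the other basis elements to `(0 1)` identifies the left-hand sides, so `(0 1)`
and `(1 2)` would commute.

Conversely `α_{A ∪ B,j} = α_{A,j} α_{B,j}` for disjoint `A` and `B`, so a union of blocks gives a
product of generators.
-/

open FreeGroup (of lift)

section InnerOn

variable {G : Type*} [Group G]

instance normal_range_conj : (MulAut.conj (G := G)).range.Normal where
  conj_mem := by
    rintro _ ⟨g, rfl⟩ φ
    refine ⟨φ g, ?_⟩
    ext x
    simp

theorem mem_range_conj_sup_fixingSubgroup_iff {s : Set G} {φ : MulAut G} :
    φ ∈ MulAut.conj.range ⊔ fixingSubgroup (MulAut G) s ↔ ∃ w, ∀ x ∈ s, φ x = w * x * w⁻¹ := by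
  rw [Subgroup.mem_sup_of_normal_left]
  constructor
  · rintro ⟨_, ⟨w, rfl⟩, ψ, hψ, rfl⟩
    rw [mem_fixingSubgroup_iff] at hψ
    refine ⟨w, fun x hx ↦ ?_⟩
    rw [MulAut.mul_apply, ← MulAut.smul_def ψ, hψ x hx, MulAut.conj_apply]
  · rintro ⟨w, hw⟩
    refine ⟨MulAut.conj w, ⟨w, rfl⟩, (MulAut.conj w)⁻¹ * φ, ?_, mul_inv_cancel_left _ _⟩
    refine (mem_fixingSubgroup_iff _).2 fun x hx ↦ ?_
    rw [MulAut.smul_def, MulAut.mul_apply, hw x hx, ← MulAut.conj_apply, MulAut.inv_apply_self]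

end InnerOn

variable {α : Type*}

theorem mulAut_freeGroup_ext {φ ψ : MulAut (FreeGroup α)} (h : ∀ i, φ (of i) = ψ (of i)) :
    φ = ψ :=
  MulEquiv.toMonoidHom_injective (FreeGroup.ext_hom _ _ h)

theorem not_commute_swap_zero_one_swap_one_two :
    ¬ Commute (Equiv.swap (0 : Fin 3) 1) (Equiv.swap 1 2) := by
  unfold Commute SemiconjBy
  decide

theorem conj_basis_ne_of_conj_basis_eq {i i' j : α} (hi : i ≠ j) (hi' : i' ≠ j)
    {w : FreeGroup α} (hw' : w * of i' * w⁻¹ = of i') :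
    w * of i * w⁻¹ ≠ (of j)⁻¹ * of i * of j := by
  classical
  intro hw
  let f : FreeGroup α →* Equiv.Perm (Fin 3) :=
    lift fun k ↦ if k = j then Equiv.swap 1 2 else Equiv.swap 0 1
  have hfi : f (of i) = Equiv.swap 0 1 := by simp [f, hi]
  have hfi' : f (of i') = Equiv.swap 0 1 := by simp [f, hi']
  have hfj : f (of j) = Equiv.swap 1 2 := by simp [f]
  have hconj : f (of i) = (f (of j))⁻¹ * f (of i) * f (of j) :=
    calc f (of i) = f (w * of i' * w⁻¹) := by rw [hw', hfi, hfi']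
      _ = f (w * of i * w⁻¹) := by simp only [map_mul, hfi, hfi']
      _ = (f (of j))⁻¹ * f (of i) * f (of j) := by simp only [hw, map_mul, map_inv]
  apply not_commute_swap_zero_one_swap_one_two
  rw [hfi, hfj, mul_assoc, eq_inv_mul_iff_mul_eq] at hconj
  exact hconj.symm

variable [DecidableEq α]

/-- The Whitehead generator `α_{I,j}` of `Aut(FreeGroup α)` over an arbitrary basis `α`; for
`α = Fin n` it is `whitehead n I j`, by `rfl`. -/
def partialConj (I : Finset α) (j : α) : MulAut (FreeGroup α) :=
  MonoidHom.toMulEquiv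
    (lift fun i ↦ if i ∈ I then (of j)⁻¹ * of i * of j else of i)
    (lift fun i ↦ if i ∈ I then of j * of i * (of j)⁻¹ else of i)
    (by ext i; by_cases hi : i ∈ I <;> by_cases hj : j ∈ I <;> simp [hi, hj, mul_assoc])
    (by ext i; by_cases hi : i ∈ I <;> by_cases hj : j ∈ I <;> simp [hi, hj, mul_assoc])

/-- The subgroup `H` of `Aut(FreeGroup α)` attached to a family `P` of blocks: it is generated by
the inner automorphisms and the `α_{B,j}` for `B ∈ P`. -/
def blockSubgroup (P : Set (Finset α)) (j : α) : Subgroup (MulAut (FreeGroup α)) :=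
  Subgroup.closure (Set.range MulAut.conj ∪ {φ | ∃ B ∈ P, φ = partialConj B j})

variable {I A B : Finset α} {P : Set (Finset α)} {i j : α}

theorem partialConj_of_mem (hi : i ∈ I) :
    partialConj I j (of i) = (of j)⁻¹ * of i * of j := by
  simp [partialConj, hi]

theorem partialConj_of_notMem (hi : i ∉ I) : partialConj I j (of i) = of i := by
  simp [partialConj, hi]

theorem partialConj_empty (j : α) : partialConj ∅ j = 1 :=
  mulAut_freeGroup_ext fun i ↦ partialConj_of_notMem (Finset.notMem_empty i)

theorem partialConj_union (hj : j ∉ A) (hAB : Disjoint A B) :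
    partialConj (A ∪ B) j = partialConj A j * partialConj B j := by
  refine mulAut_freeGroup_ext fun i ↦ ?_
  rw [MulAut.mul_apply]
  by_cases hiA : i ∈ A
  · have hiB : i ∉ B := Finset.disjoint_left.1 hAB hiA
    rw [partialConj_of_mem (Finset.mem_union_left B hiA), partialConj_of_notMem hiB,
      partialConj_of_mem hiA]
  · by_cases hiB : i ∈ B
    · rw [partialConj_of_mem (Finset.mem_union_right A hiB), partialConj_of_mem hiB, map_mul,
        map_mul, map_inv, partialConj_of_notMem hj, partialConj_of_notMem hiA]
    · rw [partialConj_of_notMem (Finset.notMem_union.2 ⟨hiA, hiB⟩), partialConj_of_notMem hiB,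
        partialConj_of_notMem hiA]

theorem partialConj_mem_range_conj_sup (h : B ⊆ I ∨ Disjoint B I) :
    partialConj I j ∈
      MulAut.conj.range ⊔ fixingSubgroup (MulAut (FreeGroup α)) (of '' (B : Set α)) := by
  rw [mem_range_conj_sup_fixingSubgroup_iff]
  rcases h with hBI | hBI
  · refine ⟨(of j)⁻¹, Set.forall_mem_image.2 fun i hi ↦ ?_⟩
    rw [partialConj_of_mem (hBI hi), inv_inv]
  · refine ⟨1, Set.forall_mem_image.2 fun i hi ↦ ?_⟩
    rw [partialConj_of_notMem (Finset.disjoint_left.1 hBI hi), one_mul, inv_one, mul_one]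

theorem subset_or_disjoint_of_partialConj_mem_range_conj_sup (hj : j ∉ B)
    (h : partialConj I j ∈
      MulAut.conj.range ⊔ fixingSubgroup (MulAut (FreeGroup α)) (of '' (B : Set α))) :
    B ⊆ I ∨ Disjoint B I := by
  obtain ⟨w, hw⟩ := mem_range_conj_sup_fixingSubgroup_iff.1 h
  rw [Set.forall_mem_image] at hw
  by_contra! hBI
  obtain ⟨i', hi'B, hi'I⟩ := Finset.not_subset.1 hBI.1
  obtain ⟨i, hiB, hiI⟩ := Finset.not_disjoint_iff.1 hBI.2
  have hwi' : w * of i' * w⁻¹ = of i' := by rw [← hw hi'B, partialConj_of_notMem hi'I]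
  have hwi : w * of i * w⁻¹ = (of j)⁻¹ * of i * of j := by
    rw [← hw hiB, partialConj_of_mem hiI]
  exact conj_basis_ne_of_conj_basis_eq (ne_of_mem_of_not_mem hiB hj)
    (ne_of_mem_of_not_mem hi'B hj) hwi' hwi

theorem blockSubgroup_le_range_conj_sup (hP : P.PairwiseDisjoint id)
    (hB : B ∈ P) :
    blockSubgroup P j ≤
      MulAut.conj.range ⊔ fixingSubgroup (MulAut (FreeGroup α)) (of '' (B : Set α)) := by
  refine (Subgroup.closure_le _).2 (Set.union_subset ?_ ?_)
  · exact fun φ hφ ↦ Subgroup.mem_sup_left hφ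
  · rintro _ ⟨C, hC, rfl⟩
    apply partialConj_mem_range_conj_sup
    exact (eq_or_ne B C).imp Eq.subset (hP hB hC)

theorem partialConj_biUnion_mem_blockSubgroup (hP : P.PairwiseDisjoint id)
    (hj : ∀ B ∈ P, j ∉ B) {Q : Finset (Finset α)} (hQ : (Q : Set (Finset α)) ⊆ P) :
    partialConj (Q.biUnion id) j ∈ blockSubgroup P j := by
  induction Q using Finset.induction_on with
  | empty =>
    rw [Finset.biUnion_empty, partialConj_empty]
    exact one_mem _
  | insert B Q hBQ ih =>
    rw [Finset.coe_insert, Set.insert_subset_iff] at hQ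
    obtain ⟨hB, hQP⟩ := hQ
    have hdisj : Disjoint B (Q.biUnion id) :=
      (Finset.disjoint_biUnion_right _ _ _).2 fun C hC ↦
        hP hB (hQP hC) (ne_of_mem_of_not_mem hC hBQ).symm
    rw [Finset.biUnion_insert, id, partialConj_union (hj B hB) hdisj]
    exact mul_mem (Subgroup.subset_closure (Or.inr ⟨B, hB, rfl⟩)) (ih hQP)

theorem exists_biUnion_eq_of_subset_or_disjoint (hI : ∀ i ∈ I, ∃ B ∈ P, i ∈ B)
    (h : ∀ B ∈ P, B ⊆ I ∨ Disjoint B I) :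
    ∃ Q : Finset (Finset α), (Q : Set (Finset α)) ⊆ P ∧ Q.biUnion id = I := by
  classical
  have hfilter : ∀ B ∈ I.powerset.filter (· ∈ P), B ∈ P ∧ B ⊆ I := by
    simp only [Finset.mem_filter, Finset.mem_powerset]
    exact fun B hB ↦ hB.symm
  refine ⟨I.powerset.filter (· ∈ P), fun B hB ↦ (hfilter B hB).1, ?_⟩
  apply Finset.Subset.antisymm
  · exact Finset.biUnion_subset.2 fun B hB ↦ (hfilter B hB).2
  · intro i hi
    obtain ⟨B, hB, hiB⟩ := hI i hi
    have hBI : B ⊆ I := (h B hB).resolve_right (Finset.not_disjoint_iff.2 ⟨i, hiB, hi⟩)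
    exact Finset.mem_biUnion.2
      ⟨B, Finset.mem_filter.2 ⟨Finset.mem_powerset.2 hBI, hB⟩, hiB⟩

theorem whitehead_mem_iff_union_of_blocks_general (hP : P.PairwiseDisjoint id)
    (hj : ∀ B ∈ P, j ∉ B) (hI : ∀ i ∈ I, ∃ B ∈ P, i ∈ B) :
    partialConj I j ∈ blockSubgroup P j ↔ ∀ B ∈ P, B ⊆ I ∨ Disjoint B I := by
  constructor
  · intro hmem B hB
    exact subset_or_disjoint_of_partialConj_mem_range_conj_sup (hj B hB)
      (blockSubgroup_le_range_conj_sup hP hB hmem)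
  · intro h
    obtain ⟨Q, hQ, rfl⟩ := exists_biUnion_eq_of_subset_or_disjoint hI h
    exact partialConj_biUnion_mem_blockSubgroup hP hj hQ

/-- Let `n ≥ 2`, `j : Fin n`, and let `P` be a partition of
`Fin n \ {j}` into pairwise disjoint nonempty blocks. Let `H` be the subgroup of
`Aut(F_n)` generated by all inner automorphisms together with the Whitehead
generators `α_{B,j}` for `B ∈ P`. Then for `j ∉ I`, `α_{I,j} ∈ H` if and only if
every block `B ∈ P` satisfies `B ⊆ I` or `B ∩ I = ∅`. -/
theorem whitehead_mem_iff_union_of_blocks (n : ℕ) (hn : 2 ≤ n) (j : Fin n)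
    (P : Finset (Finset (Fin n)))
    (hne : ∀ B ∈ P, B.Nonempty)
    (hdisj : ∀ B ∈ P, ∀ B' ∈ P, B ≠ B' → Disjoint B B')
    (hcover : P.biUnion (fun B => B) = Finset.univ \ {j})
    (I : Finset (Fin n)) (hjI : j ∉ I) :
    whitehead n I j ∈
        Subgroup.closure
          (Set.range (MulAut.conj : FreeGroup (Fin n) →* MulAut (FreeGroup (Fin n)))
            ∪ {φ | ∃ B ∈ P, φ = whitehead n B j})
      ↔ ∀ B ∈ P, B ⊆ I ∨ B ∩ I = ∅ := by
  have hmem (i : Fin n) : (∃ B ∈ P, i ∈ B) ↔ i ≠ j := by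
    simpa using Finset.ext_iff.1 hcover i
  simp only [← Finset.disjoint_iff_inter_eq_empty]
  exact whitehead_mem_iff_union_of_blocks_general (P := (P : Set (Finset (Fin n)))) hdisj
    (fun B hB hjB ↦ (hmem j).1 ⟨B, hB, hjB⟩ rfl)
    fun i hi ↦ (hmem i).2 (ne_of_mem_of_not_mem hi hjI)
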